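/- For $\varepsilon\in[0,1]$ and a binary string $b=(b_1,\dots,b_m)\in\{0,1\}^m$, define $Z^{(b)}(\varepsilon)\in[0,1]$ recursively by $Z^{(\emptyset)}(\varepsilon)=\varepsilon$ and, writing $b'=(b_1,\dots,b_{m-1})$, $Z^{(b)}(\varepsilon)=\bigl(Z^{(b')}(\varepsilon)\bigr)^2$ if $b_m=1$ and $Z^{(b)}(\varepsilon)=2Z^{(b')}(\varepsilon)-\bigl(Z^{(b')}(\varepsilon)\bigr)^2$ if $b_m=0$; these are the erasure probabilities of the $2^m$ synthetic channels obtained by polarizing a binary erasure channel $\mathrm{BEC}(\varepsilon)$. A real number $\mu>0$ is called an upper bound on the scaling exponent of the BEC if there exists a function $h:[0,1]\to[0,1]$, continuous on $(0,1)$, with $h(0)=h(1)=0$, $h(x)>0$ for all $x\in(0,1)$, and $$\sup_{x\in(0,1)}\frac{h(x^2)+h(2x-x^2)}{2h(x)}<2^{-1/\mu}.$$ Let $\mu\ge 2$ be an upper bound on the scaling exponent of the BEC. Then there exists a constant $c_1>0$, independent of $m$ and $\varepsilon$, such that for every $\varepsilon\in[0,1]$ and every integer $m\ge 0$, $$2^{-m}\cdot\#\bigl\{b\in\{0,1\}^m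 : Z^{(b)}(\varepsilon)\le 2^{-10m}\bigr\}\ \ge\ 1-\varepsilon-c_1\,2^{-m/\mu}.$$ Equivalently, if $Z_m$ denotes the value $Z^{(B)}(\varepsilon)$ for $B$ drawn uniformly at random from $\{0,1\}^m$, then $\mathbb P(Z_m\le 2^{-10m})\ge 1-\varepsilon-c_1\,2^{-m/\mu}$. -/

import Mathlib

/-- One polarization step for the binary erasure channel: the erasure probability `z`
maps to `z²` (good channel, bit `1`) or `2z − z²` (bad channel, bit `0`). -/
def polarStep (b : Bool) (z : ℝ) : ℝ := if b then z ^ 2 else 2 * z - z ^ 2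

/-- Erasure probability `Z^{(b)}(ε)` of the synthetic channel indexed by the binary
string `b = (b₁,…,b_m)`, obtained from `BEC(ε)`: the bits are applied in order,
`Z^{(b)}(ε) = polarStep b_m (Z^{(b₁,…,b_{m−1})}(ε))`. -/
def polarZ (ε : ℝ) {m : ℕ} (b : Fin m → Bool) : ℝ :=
  (List.ofFn b).foldl (fun z bit => polarStep bit z) ε

/-- `μ` is an upper bound on the scaling exponent of the BEC: there is a function
`h : [0,1] → [0,1]`, continuous on `(0,1)`, with `h(0) = h(1) = 0`, `h > 0` on `(0,1)`, and
`sup_{x∈(0,1)} (h(x²) + h(2x − x²))/(2h(x)) < 2^{−1/μ}`. The values of `h` outside `[0,1]`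
play no role. -/
def IsScalingExponentUB (μ : ℝ) : Prop :=
  ∃ h : ℝ → ℝ,
    (∀ x ∈ Set.Icc (0:ℝ) 1, h x ∈ Set.Icc (0:ℝ) 1) ∧
    ContinuousOn h (Set.Ioo (0:ℝ) 1) ∧
    h 0 = 0 ∧ h 1 = 0 ∧ (∀ x ∈ Set.Ioo (0:ℝ) 1, 0 < h x) ∧
    ∃ s : ℝ, s < (2:ℝ) ^ (-(1 / μ)) ∧
      ∀ x ∈ Set.Ioo (0:ℝ) 1, (h (x ^ 2) + h (2 * x - x ^ 2)) / (2 * h x) ≤ s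

/-!
Averaging over one polarization step contracts the test function `h` by a factor
`s < 2 ^ (-(1 / μ))`, but `h` says nothing about how fast `Z_m` approaches `0`. So we add to `h` a
small multiple of `(x (1 - x)) ^ α`. Near `0` and `1` one step multiplies this function by about
`2 ^ α / 2`, which for small `α` is below `s`: the two-cycle `x ↦ x²`, `y ↦ 2y - y²` through the
root of `x² + x = 1` forces `1 / 2 < s`. Away from the endpoints `h` is bounded below and absorbs
the error. Hence `𝔼 (Z_m (1 - Z_m)) ^ α` decays like `r ^ m` for some `r < 2 ^ (-(1 / μ))`. As
`1 ≤ Z + t ^ (-α) (Z (1 - Z)) ^ α` whenever `Z > t`, and `𝔼 Z_m = ε`, a Markov-type bound with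
`t = 2 ^ (-K m)` loses only a factor `2 ^ (α K m)`, which a small `α` makes affordable.
-/

section

open Set
open scoped BigOperators

lemma polarStep_mem_Icc (b : Bool) {z : ℝ} (hz : z ∈ Icc (0 : ℝ) 1) :
    polarStep b z ∈ Icc (0 : ℝ) 1 := by
  obtain ⟨h0, h1⟩ := hz
  cases b <;> simp only [polarStep, Bool.false_eq_true, if_false, if_true] <;>
    constructor <;> nlinarith

lemma polarZ_cons (ε : ℝ) {m : ℕ} (b : Bool) (v : Fin m → Bool) :
    polarZ ε (Fin.cons b v : Fin (m + 1) → Bool) = polarZ (polarStep b ε) v := by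
  simp [polarZ, List.ofFn_succ]

lemma polarZ_mem_Icc {ε : ℝ} (hε : ε ∈ Icc (0 : ℝ) 1) {m : ℕ} (b : Fin m → Bool) :
    polarZ ε b ∈ Icc (0 : ℝ) 1 := by
  induction m generalizing ε with
  | zero => simpa [polarZ] using hε
  | succ m ih =>
    rw [← Fin.cons_self_tail b, polarZ_cons]
    exact ih (polarStep_mem_Icc _ hε) _

lemma expect_polarStep (g : ℝ → ℝ) (x : ℝ) :
    𝔼 b, g (polarStep b x) = (g (x ^ 2) + g (2 * x - x ^ 2)) / 2 := by
  rw [Fintype.expect_eq_sum_div_card, Fintype.sum_bool, Fintype.card_bool]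
  simp [polarStep]

lemma expect_polarZ_succ (g : ℝ → ℝ) (ε : ℝ) (m : ℕ) :
    𝔼 b : Fin (m + 1) → Bool, g (polarZ ε b) =
      𝔼 c, 𝔼 b : Fin m → Bool, g (polarZ (polarStep c ε) b) := by
  rw [← Finset.expect_product', Finset.univ_product_univ]
  refine (Fintype.expect_equiv (Fin.consEquiv fun _ => Bool) _ _ fun p => ?_).symm
  exact congrArg g (polarZ_cons ε p.1 p.2).symm

/-- `g` is contracted by the factor `r` on `[0,1]` when averaged over one polarization step, so
that for `0 < r` the process `r ^ (-m) * g (Z_m)` is a supermartingale. -/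
def PolarContracting (g : ℝ → ℝ) (r : ℝ) : Prop :=
  ∀ x ∈ Icc (0 : ℝ) 1, 𝔼 b, g (polarStep b x) ≤ r * g x

lemma polarContracting_id : PolarContracting id 1 := fun x _ => by
  rw [expect_polarStep]
  simp only [id]
  linarith

lemma PolarContracting.expect_polarZ_le {g : ℝ → ℝ} {r : ℝ} (hg : PolarContracting g r)
    (hr : 0 ≤ r) {ε : ℝ} (hε : ε ∈ Icc (0 : ℝ) 1) (m : ℕ) :
    𝔼 b : Fin m → Bool, g (polarZ ε b) ≤ r ^ m * g ε := by
  induction m generalizing ε with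
  | zero => simp [polarZ]
  | succ m ih =>
    calc 𝔼 b : Fin (m + 1) → Bool, g (polarZ ε b)
        = 𝔼 c, 𝔼 b : Fin m → Bool, g (polarZ (polarStep c ε) b) := expect_polarZ_succ g ε m
      _ ≤ 𝔼 c, r ^ m * g (polarStep c ε) :=
          Finset.expect_le_expect fun c _ => ih (polarStep_mem_Icc c hε)
      _ = r ^ m * 𝔼 c, g (polarStep c ε) := (Finset.mul_expect ..).symm
      _ ≤ r ^ m * (r * g ε) := by gcongr; exact hg ε hε
      _ = r ^ (m + 1) * g ε := by ring

lemma PolarContracting.one_half_lt {g : ℝ → ℝ} {r : ℝ} (hg : PolarContracting g r)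
    (hpos : ∀ x ∈ Ioo (0 : ℝ) 1, 0 < g x) : 1 / 2 < r := by
  obtain ⟨x, hx, hroot⟩ : ∃ x ∈ Ioo (0 : ℝ) 1, x ^ 2 + x = 1 :=
    ⟨-Real.goldenConj, ⟨neg_pos.2 Real.goldenConj_neg, neg_lt.1 Real.neg_one_lt_goldenConj⟩, by
      linear_combination Real.goldenConj_sq⟩
  obtain ⟨y, hxy⟩ : ∃ y, y = x ^ 2 := ⟨_, rfl⟩
  have hy : y ∈ Ioo (0 : ℝ) 1 := ⟨by nlinarith [hx.1], by linarith [hx.1]⟩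
  have hyx : 2 * y - y ^ 2 = x := by
    rw [hxy]
    linear_combination (x - x ^ 2) * hroot
  have step_x := hg x (Ioo_subset_Icc_self hx)
  have step_y := hg y (Ioo_subset_Icc_self hy)
  rw [expect_polarStep] at step_x step_y
  rw [hyx] at step_y
  rw [← hxy] at step_x
  by_contra! hr
  have hyx_lt : g y < g x := by
    have hbad : 0 < g (2 * x - y) := hpos _ ⟨by nlinarith [hx.1], by nlinarith [hx.2]⟩
    have : r * g x ≤ 1 / 2 * g x := mul_le_mul_of_nonneg_right hr (hpos x hx).le
    linarith
  have hxy_lt : g x < g y := by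
    have hgood : 0 < g (y ^ 2) := hpos _ ⟨by nlinarith [hy.1], by nlinarith [hy.1, hy.2]⟩
    have : r * g y ≤ 1 / 2 * g y := mul_le_mul_of_nonneg_right hr (hpos y hy).le
    linarith
  exact hxy_lt.asymm hyx_lt

lemma IsScalingExponentUB.exists_polarContracting {μ : ℝ} (hμ : IsScalingExponentUB μ) :
    ∃ h : ℝ → ℝ, ∃ s < (2 : ℝ) ^ (-(1 / μ)), PolarContracting h s ∧
      MapsTo h (Icc 0 1) (Icc 0 1) ∧ ContinuousOn h (Ioo 0 1) ∧
      ∀ x ∈ Ioo (0 : ℝ) 1, 0 < h x := by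
  obtain ⟨h, hmaps, hcont, h0, h1, hpos, s, hs, hratio⟩ := hμ
  refine ⟨h, s, hs, fun x hx => ?_, hmaps, hcont, hpos⟩
  rw [expect_polarStep]
  rcases hx.1.eq_or_lt with rfl | hx0
  · simp [h0]
  rcases hx.2.eq_or_lt with rfl | hx1
  · norm_num [h1]
  have := hratio x ⟨hx0, hx1⟩
  rw [div_le_iff₀ (mul_pos two_pos (hpos x ⟨hx0, hx1⟩))] at this
  linarith

/-- The test function `(x (1 - x)) ^ α`, whose mean controls how far the erasure probabilities are
from being polarized to `0` or `1`. -/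
noncomputable def bump (α x : ℝ) : ℝ := (x * (1 - x)) ^ α

/-- The factor by which averaging over one polarization step multiplies `bump α` at `x`, given by
a formula that is continuous up to the endpoints `0` and `1`, where `bump α` vanishes. -/
noncomputable def bumpRatio (α x : ℝ) : ℝ :=
  ((x * (1 + x)) ^ α + ((2 - x) * (1 - x)) ^ α) / 2

lemma bump_nonneg (α : ℝ) {x : ℝ} (hx : x ∈ Icc (0 : ℝ) 1) : 0 ≤ bump α x :=
  Real.rpow_nonneg (mul_nonneg hx.1 (sub_nonneg.2 hx.2)) _

lemma bump_le_one {α : ℝ} (hα : 0 ≤ α) {x : ℝ} (hx : x ∈ Icc (0 : ℝ) 1) : bump α x ≤ 1 :=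
  Real.rpow_le_one (mul_nonneg hx.1 (sub_nonneg.2 hx.2)) (by nlinarith [hx.1, hx.2]) hα

lemma expect_bump_polarStep (α : ℝ) {x : ℝ} (hx : x ∈ Icc (0 : ℝ) 1) :
    𝔼 b, bump α (polarStep b x) = bumpRatio α x * bump α x := by
  have hx0 : 0 ≤ x := hx.1
  have hx1 : 0 ≤ 1 - x := sub_nonneg.2 hx.2
  have hx2 : 0 ≤ 2 - x := by linarith
  rw [expect_polarStep, bumpRatio, div_mul_eq_mul_div]
  simp only [bump]
  rw [add_mul, ← Real.mul_rpow (by positivity) (by positivity),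
    ← Real.mul_rpow (by positivity) (by positivity)]
  congr 3 <;> ring

lemma continuous_bumpRatio {α : ℝ} (hα : 0 ≤ α) : Continuous (bumpRatio α) := by
  unfold bumpRatio
  fun_prop (disch := exact fun _ => Or.inr hα)

lemma bumpRatio_zero {α : ℝ} (hα : α ≠ 0) : bumpRatio α 0 = 2 ^ α / 2 := by
  simp [bumpRatio, Real.zero_rpow hα]

lemma bumpRatio_one {α : ℝ} (hα : α ≠ 0) : bumpRatio α 1 = 2 ^ α / 2 := by
  norm_num [bumpRatio, Real.zero_rpow hα]

lemma exists_pos_le_of_le_bumpRatio {h : ℝ → ℝ} (hcont : ContinuousOn h (Ioo 0 1))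
    (hpos : ∀ x ∈ Ioo (0 : ℝ) 1, 0 < h x) {α r : ℝ} (hα : 0 < α) (hr : 2 ^ α / 2 < r) :
    ∃ c > 0, ∀ x ∈ Icc (0 : ℝ) 1, r ≤ bumpRatio α x → c ≤ h x := by
  have hcompact : IsCompact (Icc (0 : ℝ) 1 ∩ {x | r ≤ bumpRatio α x}) :=
    isCompact_Icc.inter_right (isClosed_le continuous_const (continuous_bumpRatio hα.le))
  have hsub : Icc (0 : ℝ) 1 ∩ {x | r ≤ bumpRatio α x} ⊆ Ioo 0 1 := by
    rintro x ⟨hx, hxr : r ≤ bumpRatio α x⟩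
    refine ⟨hx.1.lt_of_ne' ?_, hx.2.lt_of_ne ?_⟩ <;> rintro rfl
    · exact (hr.trans_le hxr).ne' (bumpRatio_zero hα.ne')
    · exact (hr.trans_le hxr).ne' (bumpRatio_one hα.ne')
  obtain ⟨c, hc, hle⟩ :=
    hcompact.exists_forall_le' (hcont.mono hsub) fun x hx => hpos x (hsub hx)
  exact ⟨c, hc, fun x hx hxr => hle x ⟨hx, hxr⟩⟩

lemma PolarContracting.exists_add_bump {h : ℝ → ℝ} {s r α : ℝ} (hh : PolarContracting h s)
    (hmaps : MapsTo h (Icc 0 1) (Ici 0)) (hcont : ContinuousOn h (Ioo 0 1))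
    (hpos : ∀ x ∈ Ioo (0 : ℝ) 1, 0 < h x) (hsr : s < r) (hα : 0 < α) (hr : 2 ^ α / 2 < r) :
    ∃ δ > 0, PolarContracting (fun x => h x + δ * bump α x) r := by
  obtain ⟨c, hc, hmid⟩ := exists_pos_le_of_le_bumpRatio hcont hpos hα hr
  have hgap : 0 < r - s := sub_pos.2 hsr
  refine ⟨(r - s) * c, mul_pos hgap hc, fun x hx => ?_⟩
  have hδ : 0 ≤ (r - s) * c := (mul_pos hgap hc).le
  have hbump : 0 ≤ bump α x := bump_nonneg α hx
  have herror : (r - s) * c * 𝔼 b, bump α (polarStep b x) ≤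
      (r - s) * h x + r * ((r - s) * c * bump α x) := by
    rcases le_total r (bumpRatio α x) with hlarge | hsmall
    · have hmean : 𝔼 b, bump α (polarStep b x) ≤ 1 :=
        Finset.expect_le Finset.univ_nonempty fun b _ =>
          bump_le_one hα.le (polarStep_mem_Icc b hx)
      have hr0 : 0 < r := lt_trans (by positivity) hr
      calc (r - s) * c * 𝔼 b, bump α (polarStep b x)
          ≤ (r - s) * c := mul_le_of_le_one_right hδ hmean
        _ ≤ (r - s) * h x := by gcongr; exact hmid x hx hlarge
        _ ≤ _ := le_add_of_nonneg_right (by positivity)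
    · calc (r - s) * c * 𝔼 b, bump α (polarStep b x)
          = (r - s) * c * (bumpRatio α x * bump α x) := by rw [expect_bump_polarStep α hx]
        _ ≤ (r - s) * c * (r * bump α x) := by gcongr
        _ = r * ((r - s) * c * bump α x) := by ring
        _ ≤ _ := le_add_of_nonneg_left (mul_nonneg hgap.le (hmaps hx))
  rw [Finset.expect_add_distrib, ← Finset.mul_expect]
  linarith [hh x hx]

lemma PolarContracting.exists_expect_bump_polarZ_le {h : ℝ → ℝ} {s r α : ℝ}
    (hh : PolarContracting h s) (hmaps : MapsTo h (Icc 0 1) (Icc 0 1))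
    (hcont : ContinuousOn h (Ioo 0 1)) (hpos : ∀ x ∈ Ioo (0 : ℝ) 1, 0 < h x)
    (hsr : s < r) (hα : 0 < α) (hr : 2 ^ α / 2 < r) :
    ∃ C > 0, ∀ ε ∈ Icc (0 : ℝ) 1, ∀ m : ℕ,
      𝔼 b : Fin m → Bool, bump α (polarZ ε b) ≤ C * r ^ m := by
  obtain ⟨δ, hδ, hcontr⟩ :=
    hh.exists_add_bump (hmaps.mono_right Icc_subset_Ici_self) hcont hpos hsr hα hr
  have hr0 : 0 < r := lt_trans (by positivity) hr
  refine ⟨(1 + δ) / δ, by positivity, fun ε hε m => ?_⟩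
  rw [div_mul_eq_mul_div, le_div_iff₀' hδ]
  calc δ * 𝔼 b : Fin m → Bool, bump α (polarZ ε b)
      = 𝔼 b : Fin m → Bool, δ * bump α (polarZ ε b) := Finset.mul_expect ..
    _ ≤ 𝔼 b : Fin m → Bool, (h (polarZ ε b) + δ * bump α (polarZ ε b)) :=
        Finset.expect_le_expect fun b _ =>
          le_add_of_nonneg_left (hmaps (polarZ_mem_Icc hε b)).1
    _ ≤ r ^ m * (h ε + δ * bump α ε) := hcontr.expect_polarZ_le hr0.le hε m
    _ ≤ r ^ m * (1 + δ * 1) := by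
        gcongr
        exacts [(hmaps hε).2, bump_le_one hα.le hε]
    _ = (1 + δ) * r ^ m := by ring

lemma card_filter_div_card_eq_expect {Ω : Type*} [Fintype Ω] (p : Ω → Prop) [DecidablePred p] :
    ((Finset.univ.filter p).card : ℝ) / Fintype.card Ω = 𝔼 a, if p a then (1 : ℝ) else 0 := by
  rw [Fintype.expect_eq_sum_div_card, Finset.sum_boole]

lemma uniformOn_univ_real_setOf {Ω : Type*} [Fintype Ω] [MeasurableSpace Ω]
    [MeasurableSingletonClass Ω] (p : Ω → Prop) [DecidablePred p] :
    (ProbabilityTheory.uniformOn (univ : Set Ω)).real {a | p a} =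
      ((Finset.univ.filter p).card : ℝ) / Fintype.card Ω := by
  rw [MeasureTheory.measureReal_def, ProbabilityTheory.uniformOn_univ,
    ← Finset.coe_filter_univ, MeasureTheory.Measure.count_apply_finset]
  simp

lemma one_sub_sub_bump_le_ite {α t z : ℝ} (hα : 0 < α) (hα1 : α ≤ 1) (ht : 0 < t)
    (hz : z ∈ Icc (0 : ℝ) 1) :
    1 - z - t ^ (-α) * bump α z ≤ if z ≤ t then 1 else 0 := by
  split_ifs with hzt
  · have : 0 ≤ t ^ (-α) * bump α z := mul_nonneg (by positivity) (bump_nonneg α hz)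
    linarith [hz.1]
  have hz1 : 0 ≤ 1 - z := sub_nonneg.2 hz.2
  have hfactor : 1 ≤ t ^ (-α) * z ^ α := by
    rw [Real.rpow_neg ht.le, inv_mul_eq_div, one_le_div (by positivity)]
    exact Real.rpow_le_rpow ht.le (not_le.1 hzt).le hα.le
  have : 1 - z ≤ t ^ (-α) * bump α z :=
    calc 1 - z ≤ (1 - z) ^ α :=
          Real.self_le_rpow_of_le_one hz1 (by linarith [hz.1]) hα1
      _ ≤ t ^ (-α) * z ^ α * (1 - z) ^ α := le_mul_of_one_le_left (by positivity) hfactor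
      _ = t ^ (-α) * bump α z := by rw [bump, Real.mul_rpow hz.1 hz1, mul_assoc]
  linarith

lemma one_sub_sub_expect_bump_le_fraction {α t ε : ℝ} (hα : 0 < α) (hα1 : α ≤ 1) (ht : 0 < t)
    (hε : ε ∈ Icc (0 : ℝ) 1) (m : ℕ) :
    1 - ε - t ^ (-α) * 𝔼 b : Fin m → Bool, bump α (polarZ ε b) ≤
      ((Finset.univ.filter fun b : Fin m → Bool => polarZ ε b ≤ t).card : ℝ) / 2 ^ m := by
  have hmean : 𝔼 b : Fin m → Bool, polarZ ε b ≤ ε := by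
    simpa using polarContracting_id.expect_polarZ_le zero_le_one hε m
  calc 1 - ε - t ^ (-α) * 𝔼 b : Fin m → Bool, bump α (polarZ ε b)
      ≤ 1 - 𝔼 b : Fin m → Bool, polarZ ε b -
          t ^ (-α) * 𝔼 b : Fin m → Bool, bump α (polarZ ε b) := by gcongr
    _ = 𝔼 b : Fin m → Bool, (1 - polarZ ε b - t ^ (-α) * bump α (polarZ ε b)) := by
        simp only [Finset.expect_sub_distrib, Finset.mul_expect, Fintype.expect_const]
    _ ≤ 𝔼 b : Fin m → Bool, if polarZ ε b ≤ t then (1 : ℝ) else 0 :=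
        Finset.expect_le_expect fun b _ =>
          one_sub_sub_bump_le_ite hα hα1 ht (polarZ_mem_Icc hε b)
    _ = _ := by
        rw [← card_filter_div_card_eq_expect]
        simp

lemma exists_small_exponent {r ρ : ℝ} (hr : 1 / 2 < r) (hrρ : r < ρ) (K : ℝ) :
    ∃ α : ℝ, 0 < α ∧ α ≤ 1 ∧ 2 ^ α / 2 < r ∧ 2 ^ (K * α) * r < ρ := by
  have hratio : Continuous fun α : ℝ => (2 : ℝ) ^ α / 2 :=
    (Real.continuous_const_rpow two_ne_zero).div_const 2
  have hloss : Continuous fun α : ℝ => (2 : ℝ) ^ (K * α) * r :=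
    ((Real.continuous_const_rpow two_ne_zero).comp (continuous_const_mul K)).mul_const r
  have hnear : ∀ᶠ α in nhds (0 : ℝ), 2 ^ α / 2 < r ∧ 2 ^ (K * α) * r < ρ :=
    ((hratio.tendsto 0).eventually_lt_const (by simpa using hr)).and
      ((hloss.tendsto 0).eventually_lt_const (by simpa using hrρ))
  obtain ⟨α, hα, hα01⟩ :=
    ((hnear.filter_mono nhdsWithin_le_nhds).and (Ioc_mem_nhdsGT one_pos)).exists
  exact ⟨α, hα01.1, hα01.2, hα⟩

theorem fraction_of_good_channels_general {h : ℝ → ℝ} {s ρ : ℝ} (hh : PolarContracting h s)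
    (hmaps : MapsTo h (Icc 0 1) (Icc 0 1)) (hcont : ContinuousOn h (Ioo 0 1))
    (hpos : ∀ x ∈ Ioo (0 : ℝ) 1, 0 < h x) (hsρ : s < ρ) (K : ℝ) :
    ∃ c₁ : ℝ, 0 < c₁ ∧ ∀ ε ∈ Icc (0 : ℝ) 1, ∀ m : ℕ,
      ((Finset.univ.filter (fun b : Fin m → Bool =>
          polarZ ε b ≤ (2 : ℝ) ^ (-(K * (m : ℝ))))).card : ℝ) / 2 ^ m ≥
        1 - ε - c₁ * ρ ^ m ∧
      (ProbabilityTheory.uniformOn (univ : Set (Fin m → Bool))).real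
          {b | polarZ ε b ≤ (2 : ℝ) ^ (-(K * (m : ℝ)))} ≥
        1 - ε - c₁ * ρ ^ m := by
  obtain ⟨r, hsr, hrρ⟩ := exists_between hsρ
  have hr : 1 / 2 < r := (hh.one_half_lt hpos).trans hsr
  obtain ⟨α, hα, hα1, hratio, hloss⟩ := exists_small_exponent hr hrρ K
  obtain ⟨C, hC, hbump⟩ :=
    hh.exists_expect_bump_polarZ_le hmaps hcont hpos hsr hα hratio
  refine ⟨C, hC, fun ε hε m => ?_⟩
  set t : ℝ := 2 ^ (-(K * (m : ℝ))) with ht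
  have htα : t ^ (-α) = (2 ^ (K * α)) ^ m := by
    rw [ht, ← Real.rpow_mul two_pos.le, ← Real.rpow_mul_natCast two_pos.le]
    ring_nf
  have hdecay : t ^ (-α) * 𝔼 b : Fin m → Bool, bump α (polarZ ε b) ≤ C * ρ ^ m :=
    calc t ^ (-α) * 𝔼 b : Fin m → Bool, bump α (polarZ ε b)
        ≤ t ^ (-α) * (C * r ^ m) := by gcongr; exact hbump ε hε m
      _ = C * (2 ^ (K * α) * r) ^ m := by rw [htα]; ring
      _ ≤ C * ρ ^ m := by gcongr
  have hfraction := one_sub_sub_expect_bump_le_fraction hα hα1 (by positivity : 0 < t) hε m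
  rw [uniformOn_univ_real_setOf, Fintype.card_fun, Fintype.card_bool, Fintype.card_fin,
    Nat.cast_pow, Nat.cast_ofNat, and_self]
  linarith

lemma two_rpow_neg_one_div_pow (μ : ℝ) (m : ℕ) :
    ((2 : ℝ) ^ (-(1 / μ))) ^ m = 2 ^ (-((m : ℝ) / μ)) := by
  rw [← Real.rpow_mul_natCast two_pos.le]
  ring_nf

end

/-- If `μ ≥ 2` is an upper bound on the scaling exponent of the BEC, then there is a constant
`c₁ > 0` such that for all `ε ∈ [0,1]` and all `m ≥ 0`, the fraction of synthetic channels with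
erasure probability at most `2^{−10m}` is at least `1 − ε − c₁ 2^{−m/μ}`; in probabilistic form,
the same bound holds for the probability, under a uniformly random string `b ∈ {0,1}^m`, that
`Z^{(b)}(ε) ≤ 2^{−10m}`. -/
theorem fraction_of_good_channels (μ : ℝ) (hμ : 2 ≤ μ) (hscal : IsScalingExponentUB μ) :
    ∃ c₁ : ℝ, 0 < c₁ ∧ ∀ ε ∈ Set.Icc (0:ℝ) 1, ∀ m : ℕ,
      (((Finset.univ.filter (fun b : Fin m → Bool =>
          polarZ ε b ≤ (2:ℝ) ^ (-(10 * (m:ℝ))))).card : ℝ) / 2 ^ m) ≥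
        1 - ε - c₁ * (2:ℝ) ^ (-((m:ℝ) / μ)) ∧
      (ProbabilityTheory.uniformOn (Set.univ : Set (Fin m → Bool))).real
          {b | polarZ ε b ≤ (2:ℝ) ^ (-(10 * (m:ℝ)))} ≥
        1 - ε - c₁ * (2:ℝ) ^ (-((m:ℝ) / μ)) := by
  obtain ⟨h, s, hs, hh, hmaps, hcont, hpos⟩ := hscal.exists_polarContracting
  simpa only [two_rpow_neg_one_div_pow] using
    fraction_of_good_channels_general hh hmaps hcont hpos hs 10
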